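/- Consider a SISO networked relative coupling system with heterogeneous subsystem drifts: fix A ∈ ℝ^{n×n}, b ∈ ℝ^{n×1}, c ∈ ℝ^{1×n}, a set S ⊆ {1,…,n}×{1,…,n} (the structure of the perturbations), a digraph G_sys on {1,…,N} without self-loops, and a driving set I_u. Suppose: (1) there exists an S-structured matrix δ̄ ∈ ℝ^{n×n} such that (A + δ̄, b) is controllable and (A + δ̄, c) is observable, and (2) the network is globally input-reachable. Then there exist S-structured matrices δA₁,…,δA_N ∈ ℝ^{n×n} and a weight vector w ∈ ℝ^{|E|} such that the pair (blockdiag(A+δA₁,…,A+δA_N) − L(w) ⊗ (b c), Δ ⊗ b) is controllable. -/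

import Mathlib

open Matrix
open scoped Kronecker

noncomputable section

/-- Kalman-matrix controllability of the pair `(M, Q)`. -/
def IsCtrb {R : Type*} [CommRing R] {ι κ : Type*} [Fintype ι] [Fintype κ] [DecidableEq ι]
    (M : Matrix ι ι R) (Q : Matrix ι κ R) : Prop :=
  (Matrix.of fun (i : ι) (jk : Fin (Fintype.card ι) × κ) =>
      (M ^ (jk.1 : ℕ) * Q) i jk.2).rank = Fintype.card ι

/-- Observability of `(M, c)`: controllability of `(Mᵀ, cᵀ)`. -/
def IsObsv {R : Type*} [CommRing R] {ι : Type*} [Fintype ι] [DecidableEq ι]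
    (M : Matrix ι ι R) (c : Matrix (Fin 1) ι R) : Prop :=
  IsCtrb Mᵀ cᵀ

/-- The weighted Laplacian of a digraph with edge set `E`:
`L(w)_{ij} = -w_{(j,i)}` for `i ≠ j` with `(j,i) ∈ E`, zero for other off-diagonal entries,
and diagonal entries making every row sum to zero. -/
def lapMat {R : Type*} [CommRing R] {N : ℕ} (E : Finset (Fin N × Fin N))
    (w : Fin N × Fin N → R) : Matrix (Fin N) (Fin N) R :=
  Matrix.of fun i j =>
    if i = j then ∑ k ∈ Finset.univ.filter (fun k => k ≠ i ∧ (k, i) ∈ E), w (k, i)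
    else if (j, i) ∈ E then -w (j, i) else 0

/-- The `N × |I_u|` matrix whose columns are the standard basis vectors `e_i`, `i ∈ I_u`. -/
def deltaMat {R : Type*} [CommRing R] {N : ℕ} (Iu : Finset (Fin N)) :
    Matrix (Fin N) {i // i ∈ Iu} R :=
  Matrix.of fun i j => if i = (j : Fin N) then 1 else 0

/-- Vertex `i` is reachable by a directed path (possibly of length zero) from a driving vertex. -/
def inputReachable {N : ℕ} (E : Finset (Fin N × Fin N)) (Iu : Finset (Fin N)) (i : Fin N) : Prop :=
  ∃ s ∈ Iu, Relation.ReflTransGen (fun a b => (a, b) ∈ E) s i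

/-- A matrix is `S`-structured if its entries vanish outside `S`. -/
def SStructured {n : ℕ} (S : Finset (Fin n × Fin n)) (M : Matrix (Fin n) (Fin n) ℝ) : Prop :=
  ∀ i j : Fin n, (i, j) ∉ S → M i j = 0

/-!
By the Hautus test over an algebraic closure, `(M, Q)` is controllable iff no left eigenvector of
`M` is annihilated by `Q`.

Take every drift equal to `M = A + δ̄` and write a left eigenvector of `1 ⊗ M - L ⊗ (b c)` as a
matrix `Y` with one column per vertex: `(Mᵀ - μ) Y = cᵀ (u L)` with `u = bᵀ Y`. If `μ` is an
eigenvalue of `M`, observability forces `u L = 0`; otherwise `u = g • u L`, where `g` is a value of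
the transfer function of `(Mᵀ, cᵀ, bᵀ)`. In both cases `u` vanishes or is a left eigenvector of
`L`. If `(L, Δ)` is controllable and `Y` is annihilated by `Δ ⊗ b`, this gives `u = 0`, so `Y`
consists of left eigenvectors of `M` annihilated by `b`, and `Y = 0` by controllability.

To make `(L, Δ)` controllable, put distinct nonzero weights `a i` on the edges `parent i → i` of a
breadth-first forest rooted at the driving vertices, and zero on the other edges. Let `u` be a left
eigenvector of eigenvalue `l` vanishing on the roots, so that `(a k - l) * u k = ∑ a i * u i`, the
sum being over the children `i` of `k`. A support vertex `k` with `a k ≠ l` has a child in the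
support, so every support vertex is the vertex of weight `l` or an ancestor of it; hence the support
has at most one vertex at each depth. At the parent of the topmost support vertex the equation then
fails: the left-hand side is zero, and exactly one summand on the right is not.
-/

section Controllability

variable {ι κ : Type*} [Fintype ι] [DecidableEq ι]

/-- The Kalman matrix `[Q, M Q, …, M ^ (n - 1) Q]`, whose rank defines `IsCtrb`; a column is indexed
by the power of `M` and the column of `Q` it comes from. -/
def kalmanMatrix {R : Type*} [CommRing R] (M : Matrix ι ι R) (Q : Matrix ι κ R) :
    Matrix ι (Fin (Fintype.card ι) × κ) R :=
  Matrix.of fun i jk => (M ^ (jk.1 : ℕ) * Q) i jk.2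

theorem kalmanMatrix_map {R R' : Type*} [CommRing R] [CommRing R'] (f : R →+* R')
    (M : Matrix ι ι R) (Q : Matrix ι κ R) :
    (kalmanMatrix M Q).map f = kalmanMatrix (M.map f) (Q.map f) := by
  ext i ⟨k, j⟩
  have h : (M ^ (k : ℕ) * Q).map f = M.map f ^ (k : ℕ) * Q.map f := by
    rw [Matrix.map_mul, Matrix.map_pow]
  exact congrFun₂ h i j

variable {K : Type*} [Field K]

/-- The row vectors annihilating every `M ^ k * Q`, i.e. the annihilator of the reachable space of
the pair `(M, Q)`. -/
def unreachableSubspace (M : Matrix ι ι K) (Q : Matrix ι κ K) : Submodule K (ι → K) :=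
  ⨅ k : ℕ, LinearMap.ker (M ^ k * Q).vecMulLinear

theorem mem_unreachableSubspace {M : Matrix ι ι K} {Q : Matrix ι κ K} {x : ι → K} :
    x ∈ unreachableSubspace M Q ↔ ∀ k : ℕ, x ᵥ* (M ^ k * Q) = 0 := by
  simp [unreachableSubspace]

theorem vecMul_kalmanMatrix_eq_zero_iff {M : Matrix ι ι K} {Q : Matrix ι κ K} {x : ι → K} :
    x ᵥ* kalmanMatrix M Q = 0 ↔ ∀ k < Fintype.card ι, x ᵥ* (M ^ k * Q) = 0 := by
  refine ⟨fun h k hk => funext fun j => congrFun h (⟨k, hk⟩, j), fun h => ?_⟩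
  ext ⟨k, j⟩
  exact congrFun (h k k.2) j

theorem vecMul_kalmanMatrix_eq_zero_iff_mem {M : Matrix ι ι K} {Q : Matrix ι κ K} {x : ι → K} :
    x ᵥ* kalmanMatrix M Q = 0 ↔ x ∈ unreachableSubspace M Q := by
  rw [vecMul_kalmanMatrix_eq_zero_iff, mem_unreachableSubspace]
  refine ⟨fun h k => ?_, fun h k _ => h k⟩
  -- Cayley–Hamilton: `M ^ k` is a combination of the powers of `M` below the dimension.
  rw [M.pow_eq_aeval_mod_charpoly, Polynomial.aeval_def, Polynomial.eval₂_eq_sum,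
    Polynomial.sum_def, Matrix.sum_mul, vecMul_sum]
  refine Finset.sum_eq_zero fun i hi => ?_
  have hdeg := (Polynomial.le_degree_of_mem_supp i hi).trans_lt
    (Polynomial.degree_modByMonic_lt _ M.charpoly_monic)
  rw [M.charpoly_degree_eq_dim, Nat.cast_lt] at hdeg
  rw [← Algebra.smul_def, Matrix.smul_mul, vecMul_smul, h i hdeg, smul_zero]

theorem vecMul_mem_unreachableSubspace {M : Matrix ι ι K} {Q : Matrix ι κ K} {x : ι → K}
    (hx : x ∈ unreachableSubspace M Q) : x ᵥ* M ∈ unreachableSubspace M Q := by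
  rw [mem_unreachableSubspace] at hx ⊢
  intro k
  rw [vecMul_vecMul, ← Matrix.mul_assoc, ← pow_succ']
  exact hx (k + 1)

variable [Fintype κ] {M : Matrix ι ι K} {Q : Matrix ι κ K}

theorem isCtrb_iff_linearIndependent_row :
    IsCtrb M Q ↔ LinearIndependent K (kalmanMatrix M Q).row := by
  change (kalmanMatrix M Q).rank = _ ↔ _
  rw [rank_eq_finrank_span_row, eq_comm, linearIndependent_iff_card_eq_finrank_span, Set.finrank]

theorem isCtrb_map_algebraMap_iff {F : Type*} [Field F] [Algebra K F] :
    IsCtrb (M.map (algebraMap K F)) (Q.map (algebraMap K F)) ↔ IsCtrb M Q := by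
  rw [isCtrb_iff_linearIndependent_row, isCtrb_iff_linearIndependent_row, ← kalmanMatrix_map]
  exact linearIndependent_algebraMap_comp_iff

theorem isObsv_map_algebraMap_iff {F : Type*} [Field F] [Algebra K F] {c : Matrix (Fin 1) ι K} :
    IsObsv (M.map (algebraMap K F)) (c.map (algebraMap K F)) ↔ IsObsv M c := by
  rw [IsObsv, ← transpose_map, ← transpose_map, isCtrb_map_algebraMap_iff, IsObsv]

theorem isCtrb_iff_unreachableSubspace_eq_bot :
    IsCtrb M Q ↔ unreachableSubspace M Q = ⊥ := by
  rw [isCtrb_iff_linearIndependent_row, ← vecMul_injective_iff, ← coe_vecMulLinear,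
    injective_iff_map_eq_zero, Submodule.eq_bot_iff]
  simp only [vecMulLinear_apply, vecMul_kalmanMatrix_eq_zero_iff_mem]

theorem IsCtrb.eq_zero_of_vecMul_eq_smul (h : IsCtrb M Q) {μ : K} {v : ι → K}
    (hM : v ᵥ* M = μ • v) (hQ : v ᵥ* Q = 0) : v = 0 := by
  have hpow : ∀ k : ℕ, v ᵥ* M ^ k = μ ^ k • v := by
    intro k
    induction k with
    | zero => simp
    | succ k ih => rw [pow_succ, ← vecMul_vecMul, ih, smul_vecMul, hM, smul_smul, pow_succ]
  rw [← Submodule.mem_bot K, ← isCtrb_iff_unreachableSubspace_eq_bot.mp h, mem_unreachableSubspace]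
  intro k
  rw [← vecMul_vecMul, hpow, smul_vecMul, hQ, smul_zero]

theorem IsCtrb.eq_zero_of_mul_eq_smul (h : IsCtrb M Q) {ρ : Type*} {μ : K} {X : Matrix ρ ι K}
    (hM : X * M = μ • X) (hQ : X * Q = 0) : X = 0 :=
  funext fun i => h.eq_zero_of_vecMul_eq_smul (congrFun hM i) (congrFun hQ i)

theorem isCtrb_of_forall_left_eigenvector [IsAlgClosed K]
    (h : ∀ (μ : K) (v : ι → K), v ᵥ* M = μ • v → v ᵥ* Q = 0 → v = 0) : IsCtrb M Q := by
  rw [isCtrb_iff_unreachableSubspace_eq_bot]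
  by_contra hne
  have : Nontrivial (unreachableSubspace M Q) := Submodule.nontrivial_iff_ne_bot.mpr hne
  obtain ⟨μ, hμ⟩ := Module.End.exists_eigenvalue
    (M.vecMulLinear.restrict fun _ => vecMul_mem_unreachableSubspace (Q := Q))
  obtain ⟨v, hv⟩ := hμ.exists_hasEigenvector
  refine hv.2 (Subtype.ext (h μ v (congrArg Subtype.val hv.apply_eq_smul) ?_))
  simpa using mem_unreachableSubspace.mp v.2 0

end Controllability

section Network

variable {K : Type*} [Field K] {ι ν κ : Type*} [Fintype ι] [DecidableEq ι]

theorem IsCtrb.exists_transfer_value {P : Matrix ι ι K} {q : Matrix ι (Fin 1) K}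
    (h : IsCtrb P q) (r : Matrix (Fin 1) ι K) (μ : K) :
    ∃ g : K, ∀ (Y : Matrix ι ν K) (y : Matrix (Fin 1) ν K),
      (P - μ • 1) * Y = q * y → y = 0 ∨ r * Y = g • y := by
  by_cases hdet : (P - μ • 1).det = 0
  · obtain ⟨v, hv, hvP⟩ := exists_vecMul_eq_zero_iff.mpr hdet
    have hvq : v ᵥ* q ≠ 0 := by
      refine fun h0 => hv (h.eq_zero_of_vecMul_eq_smul (μ := μ) ?_ h0)
      rwa [vecMul_sub, vecMul_smul, vecMul_one, sub_eq_zero] at hvP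
    refine ⟨0, fun Y y hY => Or.inl ?_⟩
    have hvqy : (v ᵥ* q) 0 • y 0 = 0 := by
      have h0 : (v ᵥ* q) ᵥ* y = 0 := by rw [vecMul_vecMul, ← hY, ← vecMul_vecMul, hvP, zero_vecMul]
      rwa [vecMul_eq_sum, Fin.sum_univ_one] at h0
    have hvq0 : (v ᵥ* q) 0 ≠ 0 := fun h0 => hvq (funext fun i => by rwa [Subsingleton.elim i 0])
    funext i
    rw [Subsingleton.elim i 0]
    exact (smul_eq_zero.mp hvqy).resolve_left hvq0
  · have hunit : IsUnit (P - μ • 1).det := isUnit_iff_ne_zero.mpr hdet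
    refine ⟨(r * (P - μ • 1)⁻¹ * q) 0 0, fun Y y hY => Or.inr ?_⟩
    have hrY : r * Y = r * (P - μ • 1)⁻¹ * q * y := by
      rw [Matrix.mul_assoc, ← hY, Matrix.mul_assoc, nonsing_inv_mul_cancel_left _ _ hunit]
    ext i j
    rw [hrY, mul_apply, Fin.sum_univ_one, Subsingleton.elim i 0, Matrix.smul_apply, smul_eq_mul]

variable [Fintype ν] [DecidableEq ν] [Fintype κ]
  {M : Matrix ι ι K} {b : Matrix ι (Fin 1) K} {c : Matrix (Fin 1) ι K}
  {L : Matrix ν ν K} {Q : Matrix ν κ K}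

theorem eq_zero_of_network_eigenvector (hb : IsCtrb M b) (hc : IsObsv M c) (hL : IsCtrb L Q)
    {μ : K} {Y : Matrix ι ν K} (hY : Mᵀ * Y - (b * c)ᵀ * Y * L = μ • Y) (hQ : bᵀ * Y * Q = 0) :
    Y = 0 := by
  have hpencil : (Mᵀ - μ • 1) * Y = cᵀ * (bᵀ * Y * L) := by
    rw [Matrix.sub_mul, Matrix.smul_mul, Matrix.one_mul, ← hY, sub_sub_cancel, transpose_mul]
    simp only [Matrix.mul_assoc]
  have hbY : bᵀ * Y = 0 := by
    obtain ⟨g, hg⟩ := IsCtrb.exists_transfer_value (ν := ν) hc bᵀ μ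
    rcases hg Y _ hpencil with hL0 | hgL
    · exact hL.eq_zero_of_mul_eq_smul (hL0.trans (zero_smul K _).symm) hQ
    rcases eq_or_ne g 0 with rfl | hg0
    · rw [hgL, zero_smul]
    · exact hL.eq_zero_of_mul_eq_smul ((eq_inv_smul_iff₀ hg0).mpr hgL.symm) hQ
  rw [hbY, Matrix.zero_mul, Matrix.mul_zero, Matrix.sub_mul, Matrix.smul_mul, Matrix.one_mul,
    sub_eq_zero] at hpencil
  refine transpose_eq_zero.mp (hb.eq_zero_of_mul_eq_smul (μ := μ) ?_ ?_)
  · simpa using congrArg transpose hpencil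
  · simpa using congrArg transpose hbY

theorem isCtrb_network_of_isAlgClosed [IsAlgClosed K] (hb : IsCtrb M b) (hc : IsObsv M c)
    (hL : IsCtrb L Q) : IsCtrb ((1 : Matrix ν ν K) ⊗ₖ M - L ⊗ₖ (b * c)) (Q ⊗ₖ b) := by
  refine isCtrb_of_forall_left_eigenvector fun μ v hv hQ => ?_
  obtain ⟨Y, rfl⟩ := vec_bijective.surjective v
  rw [vecMul_sub, vec_vecMul_kronecker, vec_vecMul_kronecker, Matrix.mul_one, ← vec_sub,
    ← vec_smul, vec_inj] at hv
  rw [vec_vecMul_kronecker, vec_eq_zero_iff] at hQ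
  rw [vec_eq_zero_iff]
  exact eq_zero_of_network_eigenvector hb hc hL hv hQ

theorem kronecker_map {R R' : Type*} [CommRing R] [CommRing R'] {l m n p : Type*} (f : R →+* R')
    (A : Matrix l m R) (B : Matrix n p R) : (A ⊗ₖ B).map f = A.map f ⊗ₖ B.map f := by
  ext
  simp

theorem isCtrb_network (hb : IsCtrb M b) (hc : IsObsv M c) (hL : IsCtrb L Q) :
    IsCtrb ((1 : Matrix ν ν K) ⊗ₖ M - L ⊗ₖ (b * c)) (Q ⊗ₖ b) := by
  let f := algebraMap K (AlgebraicClosure K)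
  have hmap : ((1 : Matrix ν ν K) ⊗ₖ M - L ⊗ₖ (b * c)).map f
      = 1 ⊗ₖ M.map f - L.map f ⊗ₖ (b.map f * c.map f) := by
    rw [Matrix.map_sub _ (map_sub f), kronecker_map, kronecker_map, Matrix.map_mul,
      Matrix.map_one _ (map_zero f) (map_one f)]
  rw [← isCtrb_map_algebraMap_iff (F := AlgebraicClosure K), hmap, kronecker_map]
  exact isCtrb_network_of_isAlgClosed (isCtrb_map_algebraMap_iff.mpr hb)
    (isObsv_map_algebraMap_iff.mpr hc) (isCtrb_map_algebraMap_iff.mpr hL)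

end Network

section Forest

/-- A forest on `ν` with root set `I`, given by parent pointers and the distance to the roots;
the parent of a root is a junk value. -/
structure RootedForest {ν : Type*} (I : Finset ν) where
  parent : ν → ν
  depth : ν → ℕ
  depth_eq : ∀ i ∉ I, depth i = depth (parent i) + 1

/-- The vertices at the end of a walk of length exactly `m` along `r` that starts in `I`. -/
def walkEnds {ν : Type*} (r : ν → ν → Prop) (I : Finset ν) : ℕ → Set ν
  | 0 => I
  | m + 1 => {i | ∃ j ∈ walkEnds r I m, r j i}

theorem exists_mem_walkEnds {ν : Type*} {r : ν → ν → Prop} {I : Finset ν} {s i : ν} (hs : s ∈ I)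
    (hsi : Relation.ReflTransGen r s i) : ∃ m, i ∈ walkEnds r I m := by
  induction hsi with
  | refl => exact ⟨0, hs⟩
  | tail _ hji ih =>
    obtain ⟨m, hm⟩ := ih
    exact ⟨m + 1, _, hm, hji⟩

theorem exists_rootedForest {ν : Type*} {r : ν → ν → Prop} {I : Finset ν}
    (h : ∀ i, ∃ s ∈ I, Relation.ReflTransGen r s i) :
    ∃ F : RootedForest I, ∀ i ∉ I, r (F.parent i) i := by
  classical
  have hwalk : ∀ i, ∃ m, i ∈ walkEnds r I m := fun i =>
    let ⟨_, hs, hsi⟩ := h i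
    exists_mem_walkEnds hs hsi
  let dist : ν → ℕ := fun i => Nat.find (hwalk i)
  have hparent : ∀ i, ∃ j, i ∉ I → r j i ∧ dist i = dist j + 1 := by
    intro i
    by_cases hi : i ∈ I
    · exact ⟨i, fun h => absurd hi h⟩
    have hwi : i ∈ walkEnds r I (dist i) := Nat.find_spec (hwalk i)
    rcases hm : dist i with _ | m <;> rw [hm] at hwi
    · exact absurd hwi hi
    obtain ⟨j, hj, hji⟩ := hwi
    have hle : dist j ≤ m := Nat.find_min' _ hj
    have hge : dist i ≤ dist j + 1 := Nat.find_min' _ ⟨j, Nat.find_spec (hwalk j), hji⟩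
    exact ⟨j, fun _ => ⟨hji, by omega⟩⟩
  choose parent hparent using hparent
  exact ⟨⟨parent, dist, fun i hi => (hparent i hi).2⟩, fun i hi => (hparent i hi).1⟩

namespace RootedForest

variable {ν : Type*} {I : Finset ν} (F : RootedForest I)

theorem parent_ne_self {i : ν} (hi : i ∉ I) : F.parent i ≠ i := by
  intro h
  have hdepth := F.depth_eq i hi
  rw [h] at hdepth
  omega

variable [DecidableEq ν]

/-- The weight function on directed edges giving `a i` to the forest edge from the parent of `i` to
`i`, and zero to all other edges. -/
def edgeWeight {R : Type*} [CommRing R] (a : ν → R) (e : ν × ν) : R :=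
  if e.2 ∉ I ∧ F.parent e.2 = e.1 then a e.2 else 0

/-- The Laplacian of the forest whose edge from the parent of `i` to `i` has weight `a i`: row `i`
is `a i • (eᵢ - e_{parent i})`, and zero when `i` is a root. -/
def laplacian {R : Type*} [CommRing R] (a : ν → R) : Matrix ν ν R :=
  Matrix.of fun i j =>
    if i ∈ I then 0 else a i * ((if i = j then 1 else 0) - if F.parent i = j then 1 else 0)

theorem laplacian_map {R R' : Type*} [CommRing R] [CommRing R'] (f : R →+* R') (a : ν → R) :
    (F.laplacian a).map f = F.laplacian (f ∘ a) := by
  ext i j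
  simp [laplacian, apply_ite f]

variable {K : Type*} [Field K] [Fintype ν] {a : ν → K} {l : K} {u : ν → K}

theorem sub_mul_eq_sum_children (hI : ∀ i ∈ I, u i = 0) (hu : u ᵥ* F.laplacian a = l • u) (k : ν) :
    (a k - l) * u k = ∑ i with i ∉ I ∧ F.parent i = k, a i * u i := by
  have hentry : ∀ i, u i * F.laplacian a i k =
      (if i = k then a k * u k else 0) - if i ∉ I ∧ F.parent i = k then a i * u i else 0 := by
    intro i
    by_cases hi : i ∈ I
    · have hui := hI i hi
      grind
    · simp only [laplacian, of_apply, hi]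
      grind
  have hk : ∑ i, u i * F.laplacian a i k = l * u k := congrFun hu k
  simp only [hentry, Finset.sum_sub_distrib, Finset.sum_ite_eq', Finset.mem_univ, if_true,
    ← Finset.sum_filter] at hk
  linear_combination hk

theorem exists_child_ne_zero (hI : ∀ i ∈ I, u i = 0) (hu : u ᵥ* F.laplacian a = l • u) {k : ν}
    (hk : u k ≠ 0) (hkl : a k ≠ l) : ∃ i ∉ I, F.parent i = k ∧ u i ≠ 0 := by
  have hsum := mul_ne_zero (sub_ne_zero.mpr hkl) hk
  rw [F.sub_mul_eq_sum_children hI hu] at hsum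
  obtain ⟨i, hi, hi0⟩ := Finset.exists_ne_zero_of_sum_ne_zero hsum
  obtain ⟨-, hiI, hik⟩ := Finset.mem_filter.mp hi
  exact ⟨i, hiI, hik, right_ne_zero_of_mul hi0⟩

theorem exists_descendant_eq (hI : ∀ i ∈ I, u i = 0) (hu : u ᵥ* F.laplacian a = l • u) {k : ν}
    (hk : u k ≠ 0) : ∃ m t, a m = l ∧ F.parent^[t] m = k ∧ F.depth m = F.depth k + t := by
  induction hd : Finset.univ.sup F.depth - F.depth k using Nat.strong_induction_on generalizing k
    with | _ d ih
  by_cases hkl : a k = l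
  · exact ⟨k, 0, hkl, rfl, rfl⟩
  obtain ⟨i, hiI, hik, hi⟩ := F.exists_child_ne_zero hI hu hk hkl
  have hdepth : F.depth i = F.depth k + 1 := hik ▸ F.depth_eq i hiI
  have hle : F.depth i ≤ Finset.univ.sup F.depth := Finset.le_sup (Finset.mem_univ i)
  obtain ⟨m, t, hm, hmi, hmd⟩ := ih _ (by omega) hi rfl
  exact ⟨m, t + 1, hm, by rw [Function.iterate_succ_apply', hmi, hik], by omega⟩

theorem eq_of_depth_eq (ha : Function.Injective a) (hI : ∀ i ∈ I, u i = 0)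
    (hu : u ᵥ* F.laplacian a = l • u) {i j : ν} (hi : u i ≠ 0) (hj : u j ≠ 0)
    (hij : F.depth i = F.depth j) : i = j := by
  obtain ⟨m, s, hm, rfl, hms⟩ := F.exists_descendant_eq hI hu hi
  obtain ⟨m', t, hm', rfl, hmt⟩ := F.exists_descendant_eq hI hu hj
  obtain rfl : m = m' := ha (hm.trans hm'.symm)
  obtain rfl : s = t := by omega
  rfl

theorem parent_apply_ne_zero (ha : Function.Injective a) (ha0 : ∀ i, a i ≠ 0)
    (hI : ∀ i ∈ I, u i = 0) (hu : u ᵥ* F.laplacian a = l • u) {k : ν} (hk : u k ≠ 0) :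
    u (F.parent k) ≠ 0 := by
  intro hp
  have hkI : k ∉ I := fun h => hk (hI k h)
  have hsum := F.sub_mul_eq_sum_children hI hu (F.parent k)
  rw [hp, mul_zero, Finset.sum_eq_single_of_mem k (by simp [hkI])] at hsum
  · exact mul_ne_zero (ha0 k) hk hsum.symm
  intro i hi hik
  obtain ⟨-, hiI, hp⟩ := Finset.mem_filter.mp hi
  have hdepth : F.depth i = F.depth k := by rw [F.depth_eq i hiI, F.depth_eq k hkI, hp]
  by_contra h0
  exact hik (F.eq_of_depth_eq ha hI hu (right_ne_zero_of_mul h0) hk hdepth)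

theorem eq_zero_of_vecMul_laplacian_eq_smul (ha : Function.Injective a) (ha0 : ∀ i, a i ≠ 0)
    (hI : ∀ i ∈ I, u i = 0) (hu : u ᵥ* F.laplacian a = l • u) : u = 0 := by
  ext k
  induction hd : F.depth k using Nat.strong_induction_on generalizing k with | _ d ih
  by_contra hk
  have hdepth := F.depth_eq k fun h => hk (hI k h)
  exact F.parent_apply_ne_zero ha ha0 hI hu hk (ih _ (by omega) _ rfl)

end RootedForest

end Forest

section Laplacian

variable {N : ℕ} {E : Finset (Fin N × Fin N)} {Iu : Finset (Fin N)}

theorem deltaMat_map {R R' : Type*} [CommRing R] [CommRing R'] (f : R →+* R') :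
    (deltaMat Iu : Matrix _ _ R).map f = deltaMat Iu := by
  ext
  simp [deltaMat, apply_ite f]

theorem vecMul_deltaMat {R : Type*} [CommRing R] (u : Fin N → R) :
    u ᵥ* deltaMat Iu = fun i : {i // i ∈ Iu} => u i := by
  ext
  simp [deltaMat, vecMul, dotProduct]

theorem lapMat_edgeWeight {R : Type*} [CommRing R] (F : RootedForest Iu)
    (hF : ∀ i ∉ Iu, (F.parent i, i) ∈ E) (a : Fin N → R) :
    lapMat E (F.edgeWeight a) = F.laplacian a := by
  ext i j
  by_cases hi : i ∈ Iu
  · simp [lapMat, RootedForest.laplacian, RootedForest.edgeWeight, hi]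
  rcases eq_or_ne i j with rfl | hij
  · simp [lapMat, RootedForest.laplacian, RootedForest.edgeWeight, hi, F.parent_ne_self hi, hF i hi]
  rcases eq_or_ne (F.parent i) j with rfl | hpj
  · simp [lapMat, RootedForest.laplacian, RootedForest.edgeWeight, hi, hij, hF i hi]
  · simp [lapMat, RootedForest.laplacian, RootedForest.edgeWeight, hi, hij, hpj]

theorem RootedForest.isCtrb_laplacian {K : Type*} [Field K] (F : RootedForest Iu) {a : Fin N → K}
    (ha : Function.Injective a) (ha0 : ∀ i, a i ≠ 0) :
    IsCtrb (F.laplacian a) (deltaMat Iu) := by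
  rw [← isCtrb_map_algebraMap_iff (F := AlgebraicClosure K), F.laplacian_map, deltaMat_map]
  refine isCtrb_of_forall_left_eigenvector fun l u hu hΔ => ?_
  rw [vecMul_deltaMat] at hΔ
  exact F.eq_zero_of_vecMul_laplacian_eq_smul ((algebraMap K _).injective.comp ha)
    (fun i => (map_ne_zero _).mpr (ha0 i)) (fun i hi => congrFun hΔ ⟨i, hi⟩) hu

theorem exists_isCtrb_lapMat (K : Type*) [Field K] [Infinite K]
    (h : ∀ i, inputReachable E Iu i) :
    ∃ w : Fin N × Fin N → K, IsCtrb (lapMat E w) (deltaMat Iu) := by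
  obtain ⟨F, hF⟩ := exists_rootedForest h
  let a := (Set.finite_singleton (0 : K)).infinite_compl.natEmbedding
  refine ⟨F.edgeWeight fun i => a i, ?_⟩
  rw [lapMat_edgeWeight F hF]
  exact F.isCtrb_laplacian (Subtype.val_injective.comp (a.injective.comp Fin.val_injective))
    fun i => (a i).2

end Laplacian

theorem one_kronecker_eq_of_ite {R : Type*} [CommRing R] {ν ι : Type*} [DecidableEq ν]
    (M : Matrix ι ι R) :
    (1 : Matrix ν ν R) ⊗ₖ M
      = Matrix.of fun p q : ν × ι => if p.1 = q.1 then M p.2 q.2 else 0 := by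
  ext
  simp [one_apply]

theorem stmt7_general {K : Type*} [Field K] [Infinite K] {ι : Type*} [Fintype ι] [DecidableEq ι]
    {N : ℕ} {M : Matrix ι ι K} {b : Matrix ι (Fin 1) K} {c : Matrix (Fin 1) ι K}
    {E : Finset (Fin N × Fin N)} {Iu : Finset (Fin N)}
    (hb : IsCtrb M b) (hc : IsObsv M c) (h : ∀ i : Fin N, inputReachable E Iu i) :
    ∃ w : Fin N × Fin N → K,
      IsCtrb
        ((Matrix.of fun p q : Fin N × ι => if p.1 = q.1 then M p.2 q.2 else 0)
          - lapMat E w ⊗ₖ (b * c))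
        ((deltaMat Iu : Matrix (Fin N) {i // i ∈ Iu} K) ⊗ₖ b) := by
  obtain ⟨w, hw⟩ := exists_isCtrb_lapMat K h
  exact ⟨w, one_kronecker_eq_of_ite (ν := Fin N) M ▸ isCtrb_network hb hc hw⟩

/-- Corollary 2 of the paper. SISO NRCS with heterogeneous subsystem drifts
`A + δA_i`, the perturbations `δA_i` being `S`-structured. If some `S`-structured `δ̄` makes
`(A + δ̄, b)` controllable and `(A + δ̄, c)` observable, and the network is globally
input-reachable, then there are `S`-structured perturbations and weights making the lumped
pair controllable. -/
theorem stmt7 {n N : ℕ}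
    (A : Matrix (Fin n) (Fin n) ℝ) (b : Matrix (Fin n) (Fin 1) ℝ) (c : Matrix (Fin 1) (Fin n) ℝ)
    (S : Finset (Fin n × Fin n))
    (E : Finset (Fin N × Fin N)) (hE : ∀ e ∈ E, e.1 ≠ e.2)
    (Iu : Finset (Fin N))
    (h1 : ∃ δ : Matrix (Fin n) (Fin n) ℝ,
      SStructured S δ ∧ IsCtrb (A + δ) b ∧ IsObsv (A + δ) c)
    (h2 : ∀ i : Fin N, inputReachable E Iu i) :
    ∃ (δA : Fin N → Matrix (Fin n) (Fin n) ℝ) (w : Fin N × Fin N → ℝ),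
      (∀ i : Fin N, SStructured S (δA i)) ∧
      IsCtrb
        ((Matrix.of fun p q : Fin N × Fin n =>
            if p.1 = q.1 then (A + δA p.1) p.2 q.2 else 0) - lapMat E w ⊗ₖ (b * c))
        ((deltaMat Iu : Matrix (Fin N) {i // i ∈ Iu} ℝ) ⊗ₖ b) := by
  obtain ⟨δ, hδ, hb, hc⟩ := h1
  obtain ⟨w, hw⟩ := stmt7_general hb hc h2
  exact ⟨fun _ => δ, w, fun _ => hδ, hw⟩
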